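/- Let Z be a nonnegative random variable on a probability space (Ω, μ), and let C₁ and C₂ be positive constants. If ∫ Z^{2n} dμ ≤ C₁ (C₂ n)^n for every integer n ≥ 1, then ∫ exp(δ Z²) dμ ≤ 1 + C₁/(1 − eδC₂) for every δ with 0 < δ < 1/(e C₂). -/

import Mathlib

open MeasureTheory
open scoped ENNReal

/-!
Integrate the exponential series of `δ * Z ^ 2` term by term. Since `n ^ n / n! ≤ e ^ n`, the `n`-th
term is at most `C₁ * (e * δ * C₂) ^ n`, so the terms with `n ≥ 1` are dominated by a geometric
series.
-/

section

open scoped Nat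

lemma ofReal_exp_eq_tsum {x : ℝ} (hx : 0 ≤ x) :
    ENNReal.ofReal (Real.exp x) = ∑' n : ℕ, ENNReal.ofReal (x ^ n / n !) := by
  have hsum : HasSum (fun n : ℕ ↦ x ^ n / n !) (Real.exp x) :=
    Real.exp_eq_exp_ℝ ▸ NormedSpace.expSeries_div_hasSum_exp x
  rw [← hsum.tsum_eq, ENNReal.ofReal_tsum_of_nonneg (fun n ↦ by positivity) hsum.summable]

lemma tsum_ofReal_mul_pow_succ (C : ℝ) {r : ℝ} (hr₀ : 0 ≤ r) (hr₁ : r < 1) :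
    ∑' n : ℕ, ENNReal.ofReal (C * r ^ (n + 1)) = ENNReal.ofReal (C * (r / (1 - r))) := by
  have hsum : HasSum (fun n : ℕ ↦ r ^ (n + 1)) (r / (1 - r)) := by
    simpa only [pow_succ', div_eq_mul_inv] using (hasSum_geometric_of_lt_one hr₀ hr₁).mul_left r
  have hr : 0 ≤ r / (1 - r) := div_nonneg hr₀ (sub_nonneg.2 hr₁.le)
  calc ∑' n : ℕ, ENNReal.ofReal (C * r ^ (n + 1))
      = ENNReal.ofReal C * ∑' n : ℕ, ENNReal.ofReal (r ^ (n + 1)) := by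
        simp_rw [fun n : ℕ ↦ ENNReal.ofReal_mul' (p := C) (pow_nonneg hr₀ (n + 1)),
          ENNReal.tsum_mul_left]
    _ = ENNReal.ofReal (C * (r / (1 - r))) := by
        rw [← ENNReal.ofReal_tsum_of_nonneg (fun n ↦ pow_nonneg hr₀ _) hsum.summable,
          hsum.tsum_eq, ENNReal.ofReal_mul' hr]

lemma one_add_ofReal_mul_div_one_sub_le {C r : ℝ} (hC : 0 ≤ C) (hr : r < 1) :
    1 + ENNReal.ofReal (C * (r / (1 - r))) ≤ ENNReal.ofReal (1 + C / (1 - r)) := by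
  have hr' : 0 ≤ 1 - r := sub_nonneg.2 hr.le
  rw [ENNReal.ofReal_add zero_le_one (div_nonneg hC hr'), ENNReal.ofReal_one,
    div_eq_mul_one_div C]
  gcongr

lemma pow_div_factorial_mul_pow_le {a b : ℝ} (hab : 0 ≤ a * b) (n : ℕ) :
    a ^ n / n ! * (b * n) ^ n ≤ (Real.exp 1 * a * b) ^ n := by
  have hfactorial : (n : ℝ) ^ n / n ! ≤ Real.exp 1 ^ n := by
    simpa only [← Real.exp_nat_mul, mul_one] using Real.pow_div_factorial_le_exp n n.cast_nonneg n
  calc a ^ n / n ! * (b * n) ^ n = (a * b) ^ n * ((n : ℝ) ^ n / n !) := by ring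
    _ ≤ (a * b) ^ n * Real.exp 1 ^ n := by gcongr
    _ = (Real.exp 1 * a * b) ^ n := by ring

variable {Ω : Type*} [MeasurableSpace Ω] {μ : Measure Ω} {X : Ω → ℝ}

lemma lintegral_ofReal_exp_eq_tsum (hX : AEMeasurable X μ) (hX₀ : 0 ≤ᵐ[μ] X) :
    ∫⁻ ω, ENNReal.ofReal (Real.exp (X ω)) ∂μ =
      ∑' n : ℕ, ∫⁻ ω, ENNReal.ofReal (X ω ^ n / n !) ∂μ := by
  rw [← lintegral_tsum fun n ↦ by fun_prop]
  exact lintegral_congr_ae (hX₀.mono fun ω hω ↦ ofReal_exp_eq_tsum hω)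

variable {C₁ C₂ δ : ℝ}

lemma lintegral_ofReal_mul_pow_div_factorial_le (hC₂ : 0 ≤ C₂) (hδ : 0 ≤ δ) {n : ℕ}
    (hmom : ∫⁻ ω, ENNReal.ofReal (X ω ^ n) ∂μ ≤ ENNReal.ofReal (C₁ * (C₂ * n) ^ n)) :
    ∫⁻ ω, ENNReal.ofReal ((δ * X ω) ^ n / n !) ∂μ ≤
      ENNReal.ofReal (C₁ * (Real.exp 1 * δ * C₂) ^ n) := by
  have hcoeff : 0 ≤ δ ^ n / n ! := by positivity
  calc ∫⁻ ω, ENNReal.ofReal ((δ * X ω) ^ n / n !) ∂μ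
      = ENNReal.ofReal (δ ^ n / n !) * ∫⁻ ω, ENNReal.ofReal (X ω ^ n) ∂μ := by
        simp_rw [mul_pow, mul_div_right_comm, ENNReal.ofReal_mul hcoeff]
        exact lintegral_const_mul' _ _ ENNReal.ofReal_ne_top
    _ ≤ ENNReal.ofReal (δ ^ n / n !) * ENNReal.ofReal (C₁ * (C₂ * n) ^ n) := by gcongr
    _ = ENNReal.ofReal C₁ * ENNReal.ofReal (δ ^ n / n ! * (C₂ * n) ^ n) := by
        rw [ENNReal.ofReal_mul' (by positivity), ENNReal.ofReal_mul hcoeff, mul_left_comm]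
    _ ≤ ENNReal.ofReal C₁ * ENNReal.ofReal ((Real.exp 1 * δ * C₂) ^ n) := by
        gcongr
        exact pow_div_factorial_mul_pow_le (mul_nonneg hδ hC₂) n
    _ = ENNReal.ofReal (C₁ * (Real.exp 1 * δ * C₂) ^ n) :=
        (ENNReal.ofReal_mul' (by positivity)).symm

theorem lintegral_exp_mul_le_of_moment_bound (hX : AEMeasurable X μ) (hX₀ : 0 ≤ᵐ[μ] X)
    (hC₂ : 0 ≤ C₂)
    (hmom : ∀ n : ℕ, 1 ≤ n →
      ∫⁻ ω, ENNReal.ofReal (X ω ^ n) ∂μ ≤ ENNReal.ofReal (C₁ * (C₂ * n) ^ n))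
    (hδ₀ : 0 ≤ δ) (hδ : Real.exp 1 * δ * C₂ < 1) :
    ∫⁻ ω, ENNReal.ofReal (Real.exp (δ * X ω)) ∂μ ≤
      μ .univ + ENNReal.ofReal
        (C₁ * (Real.exp 1 * δ * C₂ / (1 - Real.exp 1 * δ * C₂))) := by
  have hδX₀ : 0 ≤ᵐ[μ] fun ω ↦ δ * X ω := hX₀.mono fun ω hω ↦ mul_nonneg hδ₀ hω
  calc ∫⁻ ω, ENNReal.ofReal (Real.exp (δ * X ω)) ∂μ
      = μ .univ + ∑' n : ℕ, ∫⁻ ω, ENNReal.ofReal ((δ * X ω) ^ (n + 1) / (n + 1)!) ∂μ := by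
        rw [lintegral_ofReal_exp_eq_tsum (hX.const_mul δ) hδX₀,
          tsum_eq_zero_add' ENNReal.summable]
        simp only [pow_zero, Nat.factorial_zero, Nat.cast_one, div_one, ENNReal.ofReal_one,
          lintegral_one]
    _ ≤ μ .univ + ∑' n : ℕ, ENNReal.ofReal (C₁ * (Real.exp 1 * δ * C₂) ^ (n + 1)) := by
        gcongr with n
        exact lintegral_ofReal_mul_pow_div_factorial_le hC₂ hδ₀ (hmom _ n.succ_pos)
    _ = μ .univ + ENNReal.ofReal
        (C₁ * (Real.exp 1 * δ * C₂ / (1 - Real.exp 1 * δ * C₂))) := by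
        rw [tsum_ofReal_mul_pow_succ C₁ (by positivity) hδ]

theorem lintegral_exp_sq_le_of_moment_bound_general {Z : Ω → ℝ} (hZ : AEMeasurable Z μ)
    (hC₂ : 0 ≤ C₂)
    (hmom : ∀ n : ℕ, 1 ≤ n →
      ∫⁻ ω, ENNReal.ofReal (Z ω ^ (2 * n)) ∂μ ≤ ENNReal.ofReal (C₁ * (C₂ * n) ^ n))
    (hδ₀ : 0 ≤ δ) (hδ : Real.exp 1 * δ * C₂ < 1) :
    ∫⁻ ω, ENNReal.ofReal (Real.exp (δ * Z ω ^ 2)) ∂μ ≤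
      μ .univ + ENNReal.ofReal
        (C₁ * (Real.exp 1 * δ * C₂ / (1 - Real.exp 1 * δ * C₂))) := by
  simp only [pow_mul] at hmom
  exact lintegral_exp_mul_le_of_moment_bound (hZ.pow_const 2) (ae_of_all μ fun ω ↦ sq_nonneg (Z ω))
    hC₂ hmom hδ₀ hδ

end

/-- **Lemma 2.4 (Cohen–Cuny; after Paley–Zygmund).** If a nonnegative random variable `Z`
on a probability space satisfies `∫ Z^{2n} dμ ≤ C₁ (C₂ n)^n` for all `n ≥ 1`, then
`∫ exp(δ Z²) dμ ≤ 1 + C₁/(1 - e δ C₂)` for every `0 < δ < 1/(e C₂)`. -/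
theorem lintegral_exp_sq_le_of_moment_bound
    {Ω : Type*} [MeasurableSpace Ω] (μ : Measure Ω) [IsProbabilityMeasure μ]
    (Z : Ω → ℝ) (hZmeas : Measurable Z) (hZnonneg : ∀ ω, 0 ≤ Z ω)
    (C₁ C₂ : ℝ) (hC₁ : 0 < C₁) (hC₂ : 0 < C₂)
    (hmom : ∀ n : ℕ, 1 ≤ n →
      ∫⁻ ω, ENNReal.ofReal (Z ω ^ (2 * n)) ∂μ ≤ ENNReal.ofReal (C₁ * (C₂ * n) ^ n))
    (δ : ℝ) (hδ0 : 0 < δ) (hδ : δ < 1 / (Real.exp 1 * C₂)) :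
    ∫⁻ ω, ENNReal.ofReal (Real.exp (δ * Z ω ^ 2)) ∂μ
      ≤ ENNReal.ofReal (1 + C₁ / (1 - Real.exp 1 * δ * C₂)) := by
  have hr : Real.exp 1 * δ * C₂ < 1 := by
    rwa [lt_div_iff₀ (by positivity), mul_left_comm, ← mul_assoc] at hδ
  have hexp :=
    lintegral_exp_sq_le_of_moment_bound_general hZmeas.aemeasurable hC₂.le hmom hδ0.le hr
  rw [measure_univ] at hexp
  exact hexp.trans (one_add_ofReal_mul_div_one_sub_le hC₁.le hr)
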